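/- Let S be a skew lattice and let b, c ∈ S satisfy b∧c = c = c∧b (i.e., c ≤ b in the natural partial order). Then for every e ∈ S, (e∧b∧e)∧c∧(e∧b∧e) = e∧c∧e. Consequently, for a > b > c the composite of the coset bijections φ_{a,b} and φ_{b,c} is a restriction of the coset bijection φ_{a,c}. -/

import Mathlib

/-!
The key point is that the `∧`-reduct of a skew lattice is a *regular* band:
`x ∧ y ∧ x ∧ z ∧ x = x ∧ y ∧ z ∧ x`. Hence `(e ∧ b ∧ e) ∧ c ∧ (e ∧ b ∧ e)` collapses to
`e ∧ (b ∧ c ∧ b) ∧ e` for all `b`, `c` and `e`.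

The natural preorders of the bands `∧` and `∨` are opposite to each other. So if `k ≼ a` for `∧`,
then `r = k ∨ a ∨ k` lies above `k` and in the `𝒟`-class of `a`. This class is a rectangular band,
so `r`, and hence `k = k ∧ r`, cannot tell apart elements that are `ℒ`-related to `a`. Regularity
follows by applying this and its mirror image to `x ∧ z ∧ x ℒ z ∧ x` and `x ∧ y ℛ x ∧ y ∧ x`.
-/

/-- A band: an idempotent semigroup. It is a predicate on the operation because a skew lattice
carries two bands on the same type. -/
structure IsBand {S : Type*} (op : S → S → S) : Prop where
  idem (x : S) : op x x = x
  assoc (x y z : S) : op (op x y) z = op x (op y z)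

/-- The natural preorder `x ≼ y` of a band; its symmetric part is Green's relation `𝒟`. -/
def BandLE {S : Type*} (op : S → S → S) (x y : S) : Prop :=
  op (op x y) x = x

/-- Green's relation `ℒ` of a band. -/
def GreenL {S : Type*} (op : S → S → S) (x y : S) : Prop :=
  op x y = x ∧ op y x = y

/-- Green's relation `ℛ` of a band, written so that it unfolds to `GreenL` of the flipped
operation. -/
def GreenR {S : Type*} (op : S → S → S) (x y : S) : Prop :=
  op y x = x ∧ op x y = y

namespace IsBand

variable {S : Type*} {op : S → S → S}

local infixl:70 " ⋆ " => op

theorem op_op_self (h : IsBand op) (x y : S) : x ⋆ (x ⋆ y) = x ⋆ y := by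
  rw [← h.assoc, h.idem]

theorem op_op_op_cancel (h : IsBand op) (x y : S) : x ⋆ (y ⋆ (x ⋆ y)) = x ⋆ y := by
  rw [← h.assoc, h.idem]

protected theorem flip (h : IsBand op) : IsBand (flip op) where
  idem := h.idem
  assoc x y z := (h.assoc z y x).symm

theorem bandLE_flip (h : IsBand op) {x y : S} (hxy : BandLE op x y) : BandLE (flip op) x y :=
  (h.assoc x y x).symm.trans hxy

theorem bandLE_conj (h : IsBand op) (x y : S) : BandLE op (x ⋆ y ⋆ x) y := by
  simp only [BandLE, h.assoc, h.op_op_op_cancel]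

theorem op_eq_of_greenR_of_greenL (h : IsBand op) {p x q : S}
    (hpx : GreenR op p x) (hxq : GreenL op x q) : p ⋆ q = x := by
  obtain ⟨hxp, hpx⟩ := hpx
  obtain ⟨hxq, hqx⟩ := hxq
  have hqpx : q ⋆ p ⋆ x = q := by rw [h.assoc, hpx, hqx]
  have hqpq : q ⋆ p ⋆ q = q := by
    calc q ⋆ p ⋆ q = q ⋆ p ⋆ (q ⋆ p ⋆ x) := by rw [hqpx]
      _ = q := by rw [h.op_op_self, hqpx]
  calc p ⋆ q = x ⋆ q ⋆ p ⋆ q := by rw [hxq, hxp]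
    _ = x ⋆ (q ⋆ p ⋆ q) := by simp only [h.assoc]
    _ = x := by rw [hqpq, hxq]

theorem op_eq_op_of_greenL (h : IsBand op) {r a b : S} (hra : BandLE op r a)
    (har : BandLE op a r) (hab : GreenL op a b) : r ⋆ a = r ⋆ b := by
  obtain ⟨hab, hba⟩ := hab
  have hbra : b ⋆ r ⋆ a = b := by
    calc b ⋆ r ⋆ a = b ⋆ (a ⋆ r ⋆ a) := by rw [← h.assoc, ← h.assoc, hba]
      _ = b := by rw [har, hba]
  have hbrb : b ⋆ r ⋆ b = b := by
    calc b ⋆ r ⋆ b = b ⋆ r ⋆ (b ⋆ r ⋆ a) := by rw [hbra]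
      _ = b := by rw [h.op_op_self, hbra]
  have harb : a ⋆ r ⋆ b = a := by
    calc a ⋆ r ⋆ b = a ⋆ (b ⋆ r ⋆ b) := by rw [← h.assoc, ← h.assoc, hab]
      _ = a := by rw [hbrb, hab]
  calc r ⋆ a = r ⋆ (a ⋆ r ⋆ b) := by rw [harb]
    _ = r ⋆ a ⋆ r ⋆ b := by simp only [h.assoc]
    _ = r ⋆ b := by rw [hra]

end IsBand

/-- A skew lattice with meet `w` and join `v`: two bands linked by absorption. It is a predicate on
the pair of operations so that the vertical dual (swapping `w` and `v`) and the horizontal dual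
(flipping both) are skew lattices on the same type. -/
structure IsSkewLattice {S : Type*} (w v : S → S → S) : Prop where
  isBand_inf : IsBand w
  isBand_sup : IsBand v
  inf_absorb_left (x y : S) : w x (v x y) = x
  inf_absorb_right (x y : S) : w (v y x) x = x
  sup_absorb_left (x y : S) : v x (w x y) = x
  sup_absorb_right (x y : S) : v (w y x) x = x

namespace IsSkewLattice

variable {S : Type*} {w v : S → S → S}

local infixl:70 " ⋏ " => w
local infixl:65 " ⋎ " => v

protected theorem swap (h : IsSkewLattice w v) : IsSkewLattice v w where
  isBand_inf := h.isBand_sup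
  isBand_sup := h.isBand_inf
  inf_absorb_left := h.sup_absorb_left
  inf_absorb_right := h.sup_absorb_right
  sup_absorb_left := h.inf_absorb_left
  sup_absorb_right := h.inf_absorb_right

protected theorem flip (h : IsSkewLattice w v) : IsSkewLattice (flip w) (flip v) where
  isBand_inf := h.isBand_inf.flip
  isBand_sup := h.isBand_sup.flip
  inf_absorb_left := h.inf_absorb_right
  inf_absorb_right := h.inf_absorb_left
  sup_absorb_left := h.sup_absorb_right
  sup_absorb_right := h.sup_absorb_left

theorem greenL_sup_of_bandLE (h : IsSkewLattice w v) {x y : S} (hxy : BandLE w x y) :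
    GreenL v x (x ⋏ y) := by
  have hsup : x ⋏ y ⋎ x ⋏ y ⋏ x = x ⋏ y := h.sup_absorb_left (x ⋏ y) x
  rw [hxy] at hsup
  exact ⟨h.sup_absorb_left x y, hsup⟩

theorem greenR_sup_of_bandLE (h : IsSkewLattice w v) {x y : S} (hxy : BandLE w x y) :
    GreenR v (y ⋏ x) x :=
  (h.flip.greenL_sup_of_bandLE (h.isBand_inf.bandLE_flip hxy)).symm

theorem inf_sup_inf_of_bandLE (h : IsSkewLattice w v) {x y : S} (hxy : BandLE w x y) :
    y ⋏ x ⋎ x ⋏ y = x :=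
  h.isBand_sup.op_eq_of_greenR_of_greenL (h.greenR_sup_of_bandLE hxy) (h.greenL_sup_of_bandLE hxy)

theorem bandLE_sup_of_bandLE_inf (h : IsSkewLattice w v) {x y : S} (hxy : BandLE w x y) :
    BandLE v y x := by
  calc y ⋎ x ⋎ y = y ⋎ (y ⋏ x ⋎ x ⋏ y) ⋎ y := by rw [h.inf_sup_inf_of_bandLE hxy]
    _ = (y ⋎ y ⋏ x) ⋎ (x ⋏ y ⋎ y) := by simp only [h.isBand_sup.assoc]
    _ = y := by rw [h.sup_absorb_left, h.sup_absorb_right, h.isBand_sup.idem]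

theorem exists_inf_eq_left_of_bandLE (h : IsSkewLattice w v) {k a : S} (hka : BandLE w k a) :
    ∃ r, k ⋏ r = k ∧ BandLE w r a ∧ BandLE w a r := by
  have hak : a ⋎ k ⋎ a = a := h.bandLE_sup_of_bandLE_inf hka
  have har : BandLE v a (k ⋎ a ⋎ k) := by
    calc a ⋎ (k ⋎ a ⋎ k) ⋎ a = a ⋎ k ⋎ a ⋎ k ⋎ a := by simp only [h.isBand_sup.assoc]
      _ = a := by rw [hak, hak]
  have hra : BandLE v (k ⋎ a ⋎ k) a := h.isBand_sup.bandLE_conj k a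
  refine ⟨k ⋎ a ⋎ k, ?_, h.swap.bandLE_sup_of_bandLE_inf har, h.swap.bandLE_sup_of_bandLE_inf hra⟩
  rw [h.isBand_sup.assoc, h.inf_absorb_left]

theorem inf_eq_inf_of_greenL (h : IsSkewLattice w v) {k a b : S} (hka : BandLE w k a)
    (hab : GreenL w a b) : k ⋏ a = k ⋏ b := by
  obtain ⟨r, hkr, hra, har⟩ := h.exists_inf_eq_left_of_bandLE hka
  calc k ⋏ a = k ⋏ (r ⋏ a) := by rw [← h.isBand_inf.assoc, hkr]
    _ = k ⋏ (r ⋏ b) := by rw [h.isBand_inf.op_eq_op_of_greenL hra har hab]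
    _ = k ⋏ b := by rw [← h.isBand_inf.assoc, hkr]

theorem inf_eq_inf_of_greenR (h : IsSkewLattice w v) {k a b : S} (hka : BandLE w k a)
    (hab : GreenR w a b) : a ⋏ k = b ⋏ k :=
  h.flip.inf_eq_inf_of_greenL (h.isBand_inf.bandLE_flip hka) hab

theorem inf_regular (h : IsSkewLattice w v) (x y z : S) :
    x ⋏ y ⋏ x ⋏ z ⋏ x = x ⋏ y ⋏ z ⋏ x := by
  have hw := h.isBand_inf
  have hL : GreenL w (x ⋏ z ⋏ x) (z ⋏ x) := by
    constructor <;> simp only [hw.assoc, hw.op_op_self, hw.op_op_op_cancel]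
  have hR : GreenR w (x ⋏ y) (x ⋏ y ⋏ x) := by
    constructor <;> simp only [hw.assoc, hw.op_op_self, hw.op_op_op_cancel]
  have hxzx := h.inf_eq_inf_of_greenL (hw.bandLE_conj (x ⋏ y) (x ⋏ z ⋏ x)) hL
  have hxy := h.inf_eq_inf_of_greenR (hw.bandLE_conj (z ⋏ x) (x ⋏ y)) hR
  calc x ⋏ y ⋏ x ⋏ z ⋏ x = x ⋏ y ⋏ (x ⋏ z ⋏ x) := by simp only [hw.assoc]
    _ = x ⋏ y ⋏ (x ⋏ z ⋏ x) ⋏ (x ⋏ y) ⋏ (x ⋏ z ⋏ x) := by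
      rw [hw.assoc (x ⋏ y ⋏ (x ⋏ z ⋏ x)), hw.idem]
    _ = x ⋏ y ⋏ (x ⋏ z ⋏ x) ⋏ (x ⋏ y) ⋏ (z ⋏ x) := hxzx
    _ = x ⋏ y ⋏ x ⋏ (z ⋏ x ⋏ (x ⋏ y) ⋏ (z ⋏ x)) := by simp only [hw.assoc]
    _ = x ⋏ y ⋏ (z ⋏ x ⋏ (x ⋏ y) ⋏ (z ⋏ x)) := hxy.symm
    _ = x ⋏ y ⋏ (z ⋏ x) := by rw [hw.assoc (z ⋏ x), hw.op_op_op_cancel]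
    _ = x ⋏ y ⋏ z ⋏ x := (hw.assoc _ _ _).symm

theorem conj_inf_conj (h : IsSkewLattice w v) (e b c : S) :
    e ⋏ b ⋏ e ⋏ c ⋏ (e ⋏ b ⋏ e) = e ⋏ (b ⋏ c ⋏ b) ⋏ e := by
  have hw := h.isBand_inf
  calc e ⋏ b ⋏ e ⋏ c ⋏ (e ⋏ b ⋏ e) = e ⋏ b ⋏ (e ⋏ c ⋏ e ⋏ b ⋏ e) := by simp only [hw.assoc]
    _ = e ⋏ b ⋏ (e ⋏ c ⋏ b ⋏ e) := by rw [h.inf_regular]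
    _ = e ⋏ b ⋏ e ⋏ (c ⋏ b) ⋏ e := by simp only [hw.assoc]
    _ = e ⋏ b ⋏ (c ⋏ b) ⋏ e := h.inf_regular e b (c ⋏ b)
    _ = e ⋏ (b ⋏ c ⋏ b) ⋏ e := by simp only [hw.assoc]

end IsSkewLattice

/-- If c ≤ b then (e∧b∧e)∧c∧(e∧b∧e) = e∧c∧e; hence composites of coset bijections
restrict coset bijections. -/
theorem coset_bijection_compose {S : Type*} (wedge vee : S → S → S)
    (wedge_idem : ∀ x : S, wedge x x = x)
    (vee_idem : ∀ x : S, vee x x = x)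
    (wedge_assoc : ∀ x y z : S, wedge (wedge x y) z = wedge x (wedge y z))
    (vee_assoc : ∀ x y z : S, vee (vee x y) z = vee x (vee y z))
    (abs₁ : ∀ x y : S, wedge x (vee x y) = x)
    (abs₂ : ∀ x y : S, wedge (vee y x) x = x)
    (abs₃ : ∀ x y : S, vee x (wedge x y) = x)
    (abs₄ : ∀ x y : S, vee (wedge y x) x = x)
    (b c : S) (hbc : wedge b c = c) (hcb : wedge c b = c) :
    ∀ e : S,
      wedge (wedge (wedge (wedge e b) e) c) (wedge (wedge e b) e) = wedge (wedge e c) e := by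
  intro e
  have h : IsSkewLattice wedge vee :=
    ⟨⟨wedge_idem, wedge_assoc⟩, ⟨vee_idem, vee_assoc⟩, abs₁, abs₂, abs₃, abs₄⟩
  rw [h.conj_inf_conj, hbc, hcb]
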